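/- Let E be a complex Banach space, A ∈ 𝒫(θ_A) and B ∈ 𝒫(θ_B) resolvent commuting with θ_A > θ_B and θ_A + θ_B > π, and let x = (1/(2πi)) ∫_{Γ_{θ_B}} (A−z)⁻¹ (B+z)⁻¹ y dz. If y ∈ (E,𝒟(A))_{θ,p} or y ∈ (E,𝒟(B))_{θ,p} for some θ ∈ (0,1) and some p ∈ [1,∞), then x ∈ 𝒟(A) ∩ 𝒟(B) and (A+B)x = y. -/

import Mathlib

open Complex MeasureTheory Set Filter

noncomputable section

variable {E : Type*} [NormedAddCommGroup E] [NormedSpace ℂ E]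

/-- `R ∈ ℒ(E)` is a (two-sided) bounded inverse of `A + lam`. -/
structure IsResolventAt (A : E →ₗ.[ℂ] E) (lam : ℂ) (R : E →L[ℂ] E) : Prop where
  mem : ∀ y, R y ∈ A.domain
  right_inv : ∀ y, A ⟨R y, mem y⟩ + lam • R y = y
  left_inv : ∀ x : A.domain, R (A x + lam • (x : E)) = x

/-- The sector `S_θ = {z : |arg z| ≤ θ} ∪ {0}` (note `arg 0 = 0`). -/
def Sector (θ : ℝ) : Set ℂ := {z : ℂ | |z.arg| ≤ θ}

/-- `A ∈ 𝒫_K(θ)` with resolvent family `R`. -/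
structure IsSectorial (A : E →ₗ.[ℂ] E) (θ : ℝ) (R : ℂ → E →L[ℂ] E) (K : ℝ) : Prop where
  one_le : 1 ≤ K
  closed : A.IsClosed
  res : ∀ z ∈ Sector θ, IsResolventAt A z (R z)
  bound : ∀ z ∈ Sector θ, (1 + ‖z‖) * ‖R z‖ ≤ K

section Contours

variable {F : Type*} [NormedAddCommGroup F] [NormedSpace ℂ F]

/-- Integral over the ray `{ r e^{iθ} : r ≥ ρ }`, oriented outwards. -/
def rayIntegral (θ ρ : ℝ) (f : ℂ → F) : F :=
  ∫ r in Ioi ρ, Complex.exp (θ * I) • f (r * Complex.exp (θ * I))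

/-- Integral over the positively oriented contour `Γ_θ = { r e^{± i θ} : r ≥ 0 }`
(coming in along the ray `e^{-iθ}` and leaving along `e^{iθ}`). -/
def gammaIntegral (θ : ℝ) (f : ℂ → F) : F :=
  rayIntegral θ 0 f - rayIntegral (-θ) 0 f

/-- Integral over the arc `{ ρ e^{iφ} : θ₁ ≤ φ ≤ θ₂ }`, counterclockwise. -/
def arcIntegral (ρ θ₁ θ₂ : ℝ) (f : ℂ → F) : F :=
  ∫ φ in θ₁..θ₂, (I * ρ * Complex.exp (φ * I)) • f (ρ * Complex.exp (φ * I))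

/-- Integral over the positively oriented contour
`Γ_{ρ,θ} = { ρ e^{iφ} : θ ≤ φ ≤ 2π-θ } ∪ { r e^{±iθ} : r ≥ ρ }`. -/
def gammaRhoIntegral (ρ θ : ℝ) (f : ℂ → F) : F :=
  rayIntegral θ ρ f - rayIntegral (-θ) ρ f - arcIntegral ρ θ (2 * Real.pi - θ) f

/-- Integral over the reflected contour `-Γ_{ρ,θ}`. -/
def gammaRhoNegIntegral (ρ θ : ℝ) (f : ℂ → F) : F :=
  - gammaRhoIntegral ρ θ fun lam => f (-lam)

/-- Integral over the vertical line `iℝ - c`, oriented upwards. -/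
def lineIntegral (c : ℝ) (f : ℂ → F) : F :=
  ∫ t : ℝ, I • f (t * I - c)

end Contours

/-- The operator `𝒦 = (1/(2πi)) ∫_{Γ_{θ_B}} (A-z)⁻¹ (B+z)⁻¹ dz` applied to `y`;
here `RA (-z)` plays the role of `(A-z)⁻¹` and `RB z` of `(B+z)⁻¹`. -/
def Kop (RA RB : ℂ → E →L[ℂ] E) (θB : ℝ) (y : E) : E :=
  (2 * Real.pi * I : ℂ)⁻¹ • gammaIntegral θB fun z => RA (-z) (RB z y)

/-- The `K`-functional of the couple `(E, 𝒟(A))`, where `𝒟(A)` carries the graph norm. -/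
def interpK (A : E →ₗ.[ℂ] E) (t : ℝ) (x : E) : ℝ :=
  ⨅ w : A.domain, (‖x - (w : E)‖ + t * (‖(w : E)‖ + ‖A w‖))

/-- Membership in the real interpolation space `(E, 𝒟(A))_{θ,q}`. -/
def MemInterp (A : E →ₗ.[ℂ] E) (θ q : ℝ) (x : E) : Prop :=
  ∫⁻ t in Ioi (0 : ℝ), ENNReal.ofReal ((t ^ (-θ) * interpK A t x) ^ q / t) < ⊤

/-- Resolvent commutation for two sectorial operators. -/
def ResolventCommuting (RA RB : ℂ → E →L[ℂ] E) (θA θB : ℝ) : Prop :=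
  ∃ lam ∈ Sector θA, ∃ mu ∈ Sector θB, Commute (RA lam) (RB mu)


open Topology

lemma exp_mem_sector {θ : ℝ} (hθ : θ < Real.pi) {w : ℂ} (hw : |w.im| ≤ θ) :
    Complex.exp w ∈ Sector θ := by
  have h := abs_le.1 hw
  have : (Complex.exp w).arg = w.im := by
    rw [← Complex.log_im, Complex.log_exp (by linarith) (by linarith)]
  rwa [Sector, mem_ofPred_eq, this]

lemma ray_eq_exp {r : ℝ} (hr : 0 < r) (φ : ℝ) :
    (r : ℂ) * Complex.exp (φ * I) = Complex.exp ((Real.log r : ℝ) + φ * I) := by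
  rw [Complex.exp_add, ← Complex.ofReal_exp, Real.exp_log hr]

lemma ray_mem_sector {θ φ r : ℝ} (hθ : θ < Real.pi) (hφ : |φ| ≤ θ) (hr : 0 < r) :
    (r : ℂ) * Complex.exp (φ * I) ∈ Sector θ := by
  rw [ray_eq_exp hr]
  exact exp_mem_sector hθ (by simpa using hφ)

lemma neg_exp_add_mul_I (s φ : ℝ) :
    -Complex.exp (s + φ * I) = Complex.exp (s + (φ - Real.pi : ℝ) * I) := by
  rw [show (s : ℂ) + (φ - Real.pi : ℝ) * I = (s + φ * I) - Real.pi * I by push_cast; ring,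
    Complex.exp_sub, Complex.exp_pi_mul_I, div_neg, div_one]

lemma neg_exp_add_mul_I' (s φ : ℝ) :
    -Complex.exp (s + φ * I) = Complex.exp (s + (φ + Real.pi : ℝ) * I) := by
  rw [show (s : ℂ) + (φ + Real.pi : ℝ) * I = (s + φ * I) + Real.pi * I by push_cast; ring,
    Complex.exp_add _ (Real.pi * I), Complex.exp_pi_mul_I, mul_neg, mul_one]

lemma neg_ray_mem_sector {θ φ r : ℝ} (hθ : θ < Real.pi) (hφ : Real.pi - θ ≤ |φ|)
    (hφ' : |φ| ≤ Real.pi) (hr : 0 < r) : -((r : ℂ) * Complex.exp (φ * I)) ∈ Sector θ := by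
  rw [ray_eq_exp hr]
  rcases le_total 0 φ with h | h
  · rw [abs_of_nonneg h] at hφ hφ'
    rw [neg_exp_add_mul_I]
    exact exp_mem_sector hθ (by simpa using abs_le.2 ⟨by linarith, by linarith⟩)
  · rw [abs_of_nonpos h] at hφ hφ'
    rw [neg_exp_add_mul_I']
    exact exp_mem_sector hθ (by simpa using abs_le.2 ⟨by linarith, by linarith⟩)

lemma zero_mem_sector {θ : ℝ} (hθ : 0 ≤ θ) : (0 : ℂ) ∈ Sector θ := by
  simpa [Sector] using hθ

namespace IsResolventAt

variable {A B : E →ₗ.[ℂ] E} {P Q : E →L[ℂ] E} {lam mu : ℂ}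

lemma sub_eq (hP : IsResolventAt A lam P) (hQ : IsResolventAt A mu Q) :
    P - Q = (mu - lam) • (P * Q) := by
  ext y
  have h1 : P (A ⟨Q y, hQ.mem y⟩ + lam • Q y) = Q y := hP.left_inv ⟨Q y, hQ.mem y⟩
  rw [eq_sub_of_add_eq (hQ.right_inv y), map_add, map_sub, map_smul, map_smul] at h1
  change P y - Q y = (mu - lam) • P (Q y)
  rw [eq_comm, ← sub_eq_zero] at h1
  rw [sub_smul, ← sub_eq_zero, ← neg_eq_zero, ← h1]
  module

lemma commute (hP : IsResolventAt A lam P) (hQ : IsResolventAt A mu Q) : Commute P Q := by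
  by_cases h : mu = lam
  · subst h
    have := hP.sub_eq hQ
    rw [sub_self, zero_smul, sub_eq_zero] at this
    rw [this]
  · have h1 := hP.sub_eq hQ
    have h2 := hQ.sub_eq hP
    have h3 : (mu - lam) • (P * Q) = (mu - lam) • (Q * P) := by
      rw [← h1, ← neg_sub Q P, h2, ← neg_smul, neg_sub]
    exact smul_right_injective _ (sub_ne_zero.2 h) h3

/-- An operator commuting with one resolvent commutes with every resolvent. -/
lemma commute_of_commute (hP : IsResolventAt A lam P) (hQ : IsResolventAt A mu Q)
    {C : E →L[ℂ] E} (hC : Commute P C) : Commute Q C := by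
  have e1 : (1 + (mu - lam) • P) * Q = P := by
    rw [add_mul, one_mul, smul_mul_assoc, ← hP.sub_eq hQ]; abel
  have e3 : (1 + (lam - mu) • Q) * P = Q := by
    rw [add_mul, one_mul, smul_mul_assoc, ← hQ.sub_eq hP]; abel
  have e2 : (1 + (mu - lam) • P) * (1 + (lam - mu) • Q) = 1 := by
    rw [mul_add, mul_one, mul_smul_comm, e1]; module
  have e2' : (1 + (lam - mu) • Q) * (1 + (mu - lam) • P) = 1 := by
    rw [mul_add, mul_one, mul_smul_comm, e3]; module
  have hM : Commute (1 + (mu - lam) • P) C :=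
    (Commute.one_left C).add_left (hC.smul_left _)
  have hN : Commute (1 + (lam - mu) • Q) C := by
    calc (1 + (lam - mu) • Q) * C
        = (1 + (lam - mu) • Q) * (C * ((1 + (mu - lam) • P) * (1 + (lam - mu) • Q))) := by
          rw [e2, mul_one]
      _ = (1 + (lam - mu) • Q) * (1 + (mu - lam) • P) * (C * (1 + (lam - mu) • Q)) := by
          rw [← mul_assoc C, ← hM.eq]; simp only [mul_assoc]
      _ = C * (1 + (lam - mu) • Q) := by rw [e2', one_mul]
  rw [← e3]
  exact hN.mul_left hC

lemma map_sub_smul (hP : IsResolventAt A 0 P) (hQ : IsResolventAt A mu Q) (y : E) :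
    P (y - mu • Q y) = Q y := by
  have h : P y - Q y = (mu - 0) • P (Q y) := DFunLike.congr_fun (hP.sub_eq hQ) y
  rw [sub_zero] at h
  rw [map_sub, map_smul, ← h, sub_sub_cancel]

lemma apply_eq (hP : IsResolventAt A 0 P) {x u : E} (hx : x = P u) :
    ∃ h : x ∈ A.domain, A ⟨x, h⟩ = u := by
  subst hx
  exact ⟨hP.mem u, by simpa using hP.right_inv u⟩

lemma exists_add_eq (hP : IsResolventAt A 0 P) (hQ : IsResolventAt B 0 Q) (hPQ : Commute P Q)
    {x y v : E} (h : P x + Q x = P (Q y)) (hv : x = Q v) :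
    ∃ (hxA : x ∈ A.domain) (hxB : x ∈ B.domain), A ⟨x, hxA⟩ + B ⟨x, hxB⟩ = y := by
  have hc : ∀ u, P (Q u) = Q (P u) := fun u => DFunLike.congr_fun hPQ.eq u
  have h0 : Q (P (y - v) - x) = 0 := by
    rw [map_sub, map_sub, map_sub, ← hc, ← hc, ← hv, ← h]; abel
  have h1 : P (y - v) - x = 0 := by
    obtain ⟨h2, h3⟩ := hQ.apply_eq (u := P (y - v) - x) rfl
    rw [← h3]
    have : (⟨Q (P (y - v) - x), h2⟩ : B.domain) = 0 := Subtype.ext h0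
    rw [this, LinearPMap.map_zero]
  obtain ⟨hA, eA⟩ := hP.apply_eq (sub_eq_zero.1 h1).symm
  obtain ⟨hB, eB⟩ := hQ.apply_eq hv
  exact ⟨hA, hB, by rw [eA, eB]; abel⟩

end IsResolventAt

namespace IsSectorial

variable {A : E →ₗ.[ℂ] E} {θ K : ℝ} {R : ℂ → E →L[ℂ] E}

lemma norm_le_div (h : IsSectorial A θ R K) {z : ℂ} (hz : z ∈ Sector θ) :
    ‖R z‖ ≤ K / (1 + ‖z‖) := by
  rw [le_div_iff₀ (by positivity), mul_comm]
  exact h.bound z hz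

lemma norm_le (h : IsSectorial A θ R K) {z : ℂ} (hz : z ∈ Sector θ) : ‖R z‖ ≤ K :=
  (h.norm_le_div hz).trans
    (div_le_self (zero_le_one.trans h.one_le) (by linarith [norm_nonneg z]))

lemma continuousOn (h : IsSectorial A θ R K) : ContinuousOn R (Sector θ) := by
  have hK : 0 ≤ K := zero_le_one.trans h.one_le
  have : LipschitzOnWith (Real.toNNReal (K * K)) R (Sector θ) := by
    refine LipschitzOnWith.of_dist_le_mul fun z hz w hw => ?_
    rw [dist_eq_norm, (h.res z hz).sub_eq (h.res w hw), norm_smul, dist_eq_norm,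
      Real.coe_toNNReal _ (by positivity), mul_comm, norm_sub_rev w z]
    gcongr
    exact (norm_mul_le _ _).trans
      (mul_le_mul (h.norm_le hz) (h.norm_le hw) (norm_nonneg _) hK)
  exact this.continuousOn

lemma differentiableOn (h : IsSectorial A θ R K) : DifferentiableOn ℂ R (Sector θ) := by
  intro w hw
  have : HasDerivWithinAt R (-(R w * R w)) (Sector θ) w := by
    rw [hasDerivWithinAt_iff_tendsto_slope]
    have hc : Tendsto (fun z => -(R z * R w)) (𝓝[Sector θ \ {w}] w) (𝓝 (-(R w * R w))) :=
      (((h.continuousOn w hw).mono_left (nhdsWithin_mono _ sdiff_subset)).mul_const _).neg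
    refine hc.congr' ?_
    filter_upwards [self_mem_nhdsWithin] with z hz
    have hzw : z - w ≠ 0 := sub_ne_zero.2 hz.2
    rw [slope_def_module, (h.res z hz.1).sub_eq (h.res w hw), smul_smul, ← neg_sub z w,
      mul_neg, inv_mul_cancel₀ hzw, neg_smul, one_smul]
  exact this.differentiableWithinAt

lemma continuous_exp_line (h : IsSectorial A θ R K) (hθ : θ < Real.pi) {ψ : ℝ} (hψ : |ψ| ≤ θ)
    (y : E) : Continuous fun s : ℝ => R (Complex.exp (s + ψ * I)) y :=
  (h.continuousOn.comp_continuous (by fun_prop)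
    fun s => exp_mem_sector hθ (by simpa using hψ)).clm_apply continuous_const

/-- `∫_{Γ_φ} (A + z)⁻¹ y dz/z = -2iφ A⁻¹ y`, in logarithmic coordinates. -/
lemma tendsto_integral_exp [CompleteSpace E] (h : IsSectorial A θ R K) (hθ : θ < Real.pi) {φ : ℝ}
    (hφ : |φ| ≤ θ) (y : E) :
    Tendsto (fun n : ℝ => ∫ s in (-n)..n,
      (R (Complex.exp (s + φ * I)) y - R (Complex.exp (s + (-φ : ℝ) * I)) y)) atTop
      (𝓝 (-(2 * φ * I) • R 0 y)) := by
  have hK : 0 ≤ K := zero_le_one.trans h.one_le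
  set f : ℂ → E := fun w => R (Complex.exp w) y with hf
  have hS : ∀ w : ℂ, |w.im| ≤ θ → Complex.exp w ∈ Sector θ := fun w hw => exp_mem_sector hθ hw
  have hfd : DifferentiableOn ℂ f {w : ℂ | |w.im| ≤ θ} :=
    (h.differentiableOn.comp Complex.differentiable_exp.differentiableOn hS).clm_apply
      (differentiableOn_const y)
  have hline : ∀ ψ : ℝ, |ψ| ≤ θ → Continuous fun s : ℝ => f (s + ψ * I) :=
    fun ψ hψ => h.continuous_exp_line hθ hψ y
  have hu : ∀ u ∈ Set.uIcc (-φ) φ, |u| ≤ θ := fun u hu => by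
    refine le_trans ?_ hφ
    rcases le_total 0 φ with h0 | h0
    · rw [uIcc_of_le (by linarith)] at hu
      rw [abs_of_nonneg h0]; exact abs_le.2 hu
    · rw [uIcc_of_ge (by linarith)] at hu
      rw [abs_of_nonpos h0]; exact abs_le.2 ⟨by linarith [hu.1], hu.2⟩
  have hrect : ∀ n : ℝ, (∫ s in (-n)..n, (f (s + φ * I) - f (s + (-φ : ℝ) * I))) =
      I • ((∫ u in (-φ)..φ, f (n + u * I)) - ∫ u in (-φ)..φ, f ((-n : ℝ) + u * I)) := by
    intro n
    have hcau := Complex.integral_boundary_rect_eq_zero_of_differentiableOn f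
      ⟨-n, -φ⟩ ⟨n, φ⟩ (hfd.mono fun w hw => hu _ hw.2)
    rw [intervalIntegral.integral_sub ((hline φ hφ).intervalIntegrable _ _)
      ((hline (-φ) (by rwa [abs_neg])).intervalIntegrable _ _), smul_sub]
    simp only at hcau
    rw [← sub_eq_zero, ← neg_eq_zero, ← hcau]
    abel
  have hvert : ∀ n : ℝ, ContinuousOn (fun u : ℝ => f (n + u * I)) (Set.uIcc (-φ) φ) := fun n =>
    hfd.continuousOn.comp (by fun_prop) fun u hu' => by simpa using hu u hu'
  have hbd : ∀ n u : ℝ, u ∈ Set.uIcc (-φ) φ → ‖f (n + u * I)‖ ≤ K * ‖y‖ := fun n u hu' =>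
    (R _).le_of_opNorm_le (h.norm_le (hS _ (by simpa using hu u hu'))) y
  have hmeas : ∀ n : ℝ, AEStronglyMeasurable (fun u : ℝ => f (n + u * I))
      (volume.restrict (Set.uIoc (-φ) φ)) := fun n =>
    ((hvert n).mono Set.uIoc_subset_uIcc).aestronglyMeasurable measurableSet_uIoc
  have hnorm : ∀ n u : ℝ, ‖Complex.exp (n + u * I)‖ = Real.exp n := fun n u => by
    simp [Complex.norm_exp]
  have hright : Tendsto (fun n : ℝ => ∫ u in (-φ)..φ, f (n + u * I)) atTop
      (𝓝 (∫ _ in (-φ)..φ, (0 : E))) := by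
    refine intervalIntegral.tendsto_integral_filter_of_dominated_convergence
      (fun _ => K * ‖y‖) (.of_forall hmeas)
      (.of_forall fun n => .of_forall fun u hu' => hbd n u (Set.uIoc_subset_uIcc hu'))
      intervalIntegrable_const (.of_forall fun u hu' => ?_)
    have hu'' := hu u (Set.uIoc_subset_uIcc hu')
    have hlim : Tendsto (fun n : ℝ => K / (1 + Real.exp n) * ‖y‖) atTop (𝓝 (0 * ‖y‖)) :=
      ((tendsto_atTop_add_const_left _ _ Real.tendsto_exp_atTop).const_div_atTop K).mul_const _
    rw [zero_mul] at hlim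
    refine squeeze_zero_norm (fun n => ?_) hlim
    rw [← hnorm n u]
    exact (R _).le_of_opNorm_le (h.norm_le_div (hS _ (by simpa using hu''))) y
  have hleft : Tendsto (fun n : ℝ => ∫ u in (-φ)..φ, f ((-n : ℝ) + u * I)) atTop
      (𝓝 (∫ _ in (-φ)..φ, R 0 y)) := by
    refine intervalIntegral.tendsto_integral_filter_of_dominated_convergence
      (fun _ => K * ‖y‖) (.of_forall fun n => hmeas (-n))
      (.of_forall fun n => .of_forall fun u hu' => hbd (-n) u (Set.uIoc_subset_uIcc hu'))
      intervalIntegrable_const (.of_forall fun u hu' => ?_)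
    have hu'' := hu u (Set.uIoc_subset_uIcc hu')
    have h0 : Tendsto (fun n : ℝ => Complex.exp ((-n : ℝ) + u * I)) atTop
        (𝓝[Sector θ] 0) := by
      refine tendsto_nhdsWithin_iff.2 ⟨?_, .of_forall fun n => hS _ (by simpa using hu'')⟩
      rw [tendsto_zero_iff_norm_tendsto_zero]
      simp only [hnorm]
      exact Real.tendsto_exp_neg_atTop_nhds_zero
    have hR := (h.continuousOn 0 (zero_mem_sector ((abs_nonneg φ).trans hφ))).tendsto.comp h0
    exact ((ContinuousLinearMap.apply ℂ E y).continuous.tendsto _).comp hR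
  have := (hright.sub hleft).const_smul I
  simp only [← hrect] at this
  convert this using 2
  simp only [intervalIntegral.integral_zero, intervalIntegral.integral_const, zero_sub, smul_neg,
    neg_smul, sub_neg_eq_add]
  rw [← Complex.coe_smul, smul_smul]
  congr 2
  push_cast
  ring

/-- `‖A (A + z)⁻¹ y‖` is controlled by the `K`-functional. -/
lemma norm_sub_smul_le (h : IsSectorial A θ R K) {z : ℂ} (hz : z ∈ Sector θ) (y : E) :
    ‖y - z • R z y‖ ≤ (1 + K) * interpK A (1 / (1 + ‖z‖)) y := by
  have hK : 0 ≤ K := zero_le_one.trans h.one_le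
  have hz0 := norm_nonneg z
  rw [← div_le_iff₀' (by positivity)]
  refine le_ciInf fun w => ?_
  rw [div_le_iff₀' (by positivity)]
  have hw := (h.res z hz).left_inv w
  rw [map_add, map_smul] at hw
  have e : y - z • R z y = (y - w) - z • R z (y - w) + R z (A w) := by
    rw [map_sub, eq_sub_of_add_eq hw]
    module
  have b1 : ‖z • R z (y - w)‖ ≤ K * ‖y - w‖ := by
    rw [norm_smul]
    calc ‖z‖ * ‖R z (y - w)‖ ≤ ‖z‖ * (‖R z‖ * ‖y - w‖) := by gcongr; exact (R z).le_opNorm _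
      _ = (‖z‖ * ‖R z‖) * ‖y - w‖ := by ring
      _ ≤ K * ‖y - w‖ := by
        gcongr
        exact le_trans (by gcongr; linarith) (h.bound z hz)
  have b2 : ‖R z (A w)‖ ≤ K / (1 + ‖z‖) * ‖A w‖ :=
    (R z).le_of_opNorm_le (h.norm_le_div hz) _
  rw [e]
  calc ‖(y - w) - z • R z (y - w) + R z (A w)‖
      ≤ ‖y - w‖ + ‖z • R z (y - w)‖ + ‖R z (A w)‖ :=
        (norm_add_le _ _).trans (by gcongr; exact norm_sub_le _ _)
    _ ≤ ‖y - w‖ + K * ‖y - w‖ + K / (1 + ‖z‖) * ‖A w‖ := by gcongr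
    _ = (1 + K) * ‖y - w‖ + K * (1 / (1 + ‖z‖) * ‖A w‖) := by ring
    _ ≤ (1 + K) * ‖y - w‖ + (1 + K) * (1 / (1 + ‖z‖) * (‖(w : E)‖ + ‖A w‖)) := by
        gcongr <;> linarith [norm_nonneg (w : E)]
    _ = _ := by ring

end IsSectorial

section Interpolation

variable {A : E →ₗ.[ℂ] E}

lemma interpK_term_nonneg {t : ℝ} (ht : 0 ≤ t) (x : E) (w : A.domain) :
    0 ≤ ‖x - (w : E)‖ + t * (‖(w : E)‖ + ‖A w‖) := by positivity

lemma interpK_nonneg {t : ℝ} (ht : 0 ≤ t) (x : E) : 0 ≤ interpK A t x :=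
  Real.iInf_nonneg (interpK_term_nonneg ht x)

lemma interpK_mono {s t : ℝ} (hs : 0 ≤ s) (hst : s ≤ t) (x : E) :
    interpK A s x ≤ interpK A t x :=
  ciInf_mono ⟨0, by rintro _ ⟨w, rfl⟩; exact interpK_term_nonneg hs x w⟩ fun w => by gcongr

/-- `(E, 𝒟(A))_{θ,p} ⊆ (E, 𝒟(A))_{θ,∞}`. -/
lemma MemInterp.exists_interpK_le {θ p : ℝ} {x : E} (h : MemInterp A θ p x) (hθ : 0 ≤ θ)
    (hp : 0 < p) : ∃ C, ∀ t, 0 < t → interpK A t x ≤ C * t ^ θ := by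
  set M := ∫⁻ t in Ioi (0 : ℝ), ENNReal.ofReal ((t ^ (-θ) * interpK A t x) ^ p / t) with hM
  have hMtop : M ≠ ⊤ := ne_of_lt h
  refine ⟨2 ^ θ * (2 * M.toReal) ^ p⁻¹, fun t ht => ?_⟩
  have hk := interpK_nonneg (A := A) ht.le x
  have key : ENNReal.ofReal (((2 * t) ^ (-θ) * interpK A t x) ^ p / (2 * t)) *
      volume (Ioc t (2 * t)) ≤ M := by
    rw [← setLIntegral_const]
    refine (setLIntegral_mono' measurableSet_Ioc fun s hs => ?_).trans
      (lintegral_mono_set fun s hs => ht.trans hs.1)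
    have hs0 : 0 < s := ht.trans hs.1
    apply ENNReal.ofReal_le_ofReal
    refine div_le_div₀ (by have := interpK_nonneg (A := A) hs0.le x; positivity) ?_ hs0 hs.2
    refine Real.rpow_le_rpow (by positivity) ?_ hp.le
    refine mul_le_mul ?_ (interpK_mono ht.le hs.1.le x) hk (by positivity)
    exact Real.rpow_le_rpow_of_nonpos hs0 hs.2 (by linarith)
  rw [Real.volume_Ioc, ← ENNReal.ofReal_mul (by positivity)] at key
  have key2 := ENNReal.toReal_mono hMtop key
  rw [ENNReal.toReal_ofReal (by have : 0 ≤ 2 * t - t := by linarith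
                                positivity)] at key2
  have key3 : ((2 * t) ^ (-θ) * interpK A t x) ^ p ≤ 2 * M.toReal := by
    have e : ∀ a : ℝ, a / (2 * t) * (2 * t - t) = a / 2 := fun a => by field_simp; ring
    rw [e] at key2
    linarith
  have key4 : (2 * t) ^ (-θ) * interpK A t x ≤ (2 * M.toReal) ^ p⁻¹ := by
    rwa [Real.le_rpow_inv_iff_of_pos (by positivity) (by positivity) hp]
  rw [Real.rpow_neg (by positivity), inv_mul_le_iff₀ (by positivity),
    Real.mul_rpow (by norm_num) ht.le] at key4
  linarith

lemma IsSectorial.exists_norm_sub_smul_le {θA θ p K : ℝ} {R : ℂ → E →L[ℂ] E} {y : E}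
    (h : IsSectorial A θA R K) (hy : MemInterp A θ p y) (hθ : 0 ≤ θ) (hp : 0 < p) :
    ∃ C, ∀ z ∈ Sector θA, ‖y - z • R z y‖ ≤ C * (‖z‖ + 1) ^ (-θ) := by
  obtain ⟨C, hCle⟩ := hy.exists_interpK_le hθ hp
  have hK : 0 ≤ K := zero_le_one.trans h.one_le
  refine ⟨(1 + K) * C, fun z hz => (h.norm_sub_smul_le hz y).trans ?_⟩
  rw [mul_assoc]
  gcongr
  refine (hCle _ (by positivity)).trans_eq ?_
  rw [one_div, Real.inv_rpow (by positivity), ← Real.rpow_neg (by positivity), add_comm]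

end Interpolation

lemma integrableOn_ray {F : Type*} [NormedAddCommGroup F] {f : ℂ → F} {φ δ C : ℝ} (hδ : 0 < δ)
    (hc : ContinuousOn (fun r : ℝ => f (r * Complex.exp (φ * I))) (Ioi 0))
    (hb : ∀ r : ℝ, 0 < r →
      ‖f (r * Complex.exp (φ * I))‖ ≤ C * (r + 1) ^ (-1 - δ)) :
    IntegrableOn (fun r : ℝ => f (r * Complex.exp (φ * I))) (Ioi 0) := by
  refine Integrable.mono' (g := fun r : ℝ => C * (r + 1) ^ (-1 - δ)) ?_
    (hc.aestronglyMeasurable measurableSet_Ioi)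
    ((ae_restrict_iff' measurableSet_Ioi).2 (.of_forall hb))
  exact (integrableOn_add_rpow_Ioi_of_lt (by linarith) (by norm_num)).const_mul C

section Contours

variable {F G : Type*} [NormedAddCommGroup F] [NormedSpace ℂ F]
  [NormedAddCommGroup G] [NormedSpace ℂ G]

lemma map_gammaIntegral [CompleteSpace F] [CompleteSpace G] (L : F →L[ℂ] G) {f : ℂ → F} {θ : ℝ}
    (h1 : IntegrableOn (fun r : ℝ => f (r * Complex.exp (θ * I))) (Ioi 0))
    (h2 : IntegrableOn (fun r : ℝ => f (r * Complex.exp ((-θ : ℝ) * I))) (Ioi 0)) :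
    L (gammaIntegral θ f) = gammaIntegral θ fun z => L (f z) := by
  simp only [gammaIntegral, rayIntegral, map_sub]
  have h1' : IntegrableOn (fun r : ℝ => Complex.exp (θ * I) • f (r * Complex.exp (θ * I)))
    (Ioi 0) := h1.smul _
  have h2' : IntegrableOn (fun r : ℝ =>
    Complex.exp ((-θ : ℝ) * I) • f (r * Complex.exp ((-θ : ℝ) * I))) (Ioi 0) := h2.smul _
  rw [← L.integral_comp_comm h1', ← L.integral_comp_comm h2']
  simp only [map_smul]

lemma gammaIntegral_congr {f g : ℂ → F} {θ : ℝ}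
    (h1 : ∀ r : ℝ, 0 < r → f (r * Complex.exp (θ * I)) = g (r * Complex.exp (θ * I)))
    (h2 : ∀ r : ℝ, 0 < r →
      f (r * Complex.exp ((-θ : ℝ) * I)) = g (r * Complex.exp ((-θ : ℝ) * I))) :
    gammaIntegral θ f = gammaIntegral θ g := by
  unfold gammaIntegral rayIntegral
  congr 1
  · exact setIntegral_congr_fun measurableSet_Ioi fun r hr => by simp only [h1 r hr]
  · exact setIntegral_congr_fun measurableSet_Ioi fun r hr => by simp only [h2 r hr]

/-- `∫_{Γ_θ} f dz` in logarithmic coordinates. -/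
lemma tendsto_integral_exp_gammaIntegral {f : ℂ → F} {θ : ℝ}
    (h1 : IntegrableOn (fun r : ℝ => f (r * Complex.exp (θ * I))) (Ioi 0))
    (h2 : IntegrableOn (fun r : ℝ => f (r * Complex.exp ((-θ : ℝ) * I))) (Ioi 0)) :
    Tendsto (fun n : ℝ => ∫ s in (-n)..n,
      (Complex.exp (s + θ * I) • f (Complex.exp (s + θ * I)) -
        Complex.exp (s + (-θ : ℝ) * I) • f (Complex.exp (s + (-θ : ℝ) * I)))) atTop
      (𝓝 (gammaIntegral θ f)) := by
  set g : ℝ → F := fun r => Complex.exp (θ * I) • f (r * Complex.exp (θ * I)) -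
    Complex.exp ((-θ : ℝ) * I) • f (r * Complex.exp ((-θ : ℝ) * I)) with hg
  have hgi : IntegrableOn g (Ioi 0) := (h1.smul _).sub (h2.smul _)
  have hgamma : gammaIntegral θ f = ∫ r in Ioi 0, g r :=
    (integral_sub (h1.smul _) (h2.smul _)).symm
  have himg : Real.exp '' univ = Ioi 0 := by rw [image_univ, Real.range_exp]
  have hd : ∀ s ∈ (univ : Set ℝ), HasDerivWithinAt Real.exp (Real.exp s) univ s :=
    fun s _ => (Real.hasDerivAt_exp s).hasDerivWithinAt
  have e : ∀ s : ℝ, |Real.exp s| • g (Real.exp s) =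
      Complex.exp (s + θ * I) • f (Complex.exp (s + θ * I)) -
        Complex.exp (s + (-θ : ℝ) * I) • f (Complex.exp (s + (-θ : ℝ) * I)) := fun s => by
    rw [abs_of_pos (Real.exp_pos s), ← Complex.coe_smul, hg]
    simp only [smul_sub, smul_smul, Complex.ofReal_exp, ← Complex.exp_add]
  rw [hgamma, ← himg, integral_image_eq_integral_abs_deriv_smul MeasurableSet.univ hd
    Real.exp_injective.injOn, setIntegral_univ]
  rw [← himg, integrableOn_image_iff_integrableOn_abs_deriv_smul MeasurableSet.univ hd
    Real.exp_injective.injOn, integrableOn_univ] at hgi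
  simp only [e] at hgi ⊢
  exact intervalIntegral_tendsto_integral hgi tendsto_neg_atTop_atBot tendsto_id

end Contours

lemma integrableOn_ray_clm_apply {S : ℂ → E →L[ℂ] E} {g : ℂ → E} {φ δ C K : ℝ} (hδ : 0 < δ)
    (hK : 0 ≤ K)
    (hS : ContinuousOn (fun r : ℝ => S (r * Complex.exp (φ * I))) (Ioi 0))
    (hg : ContinuousOn (fun r : ℝ => g (r * Complex.exp (φ * I))) (Ioi 0))
    (hSb : ∀ r : ℝ, 0 < r → ‖S (r * Complex.exp (φ * I))‖ ≤
      K / (1 + ‖(r : ℂ) * Complex.exp (φ * I)‖))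
    (hgb : ∀ r : ℝ, 0 < r → ‖g (r * Complex.exp (φ * I))‖ ≤
      C * (‖(r : ℂ) * Complex.exp (φ * I)‖ + 1) ^ (-δ)) :
    IntegrableOn (fun r : ℝ => S (r * Complex.exp (φ * I)) (g (r * Complex.exp (φ * I))))
      (Ioi 0) := by
  refine integrableOn_ray (f := fun z => S z (g z)) (C := K * C) hδ (hS.clm_apply hg)
    fun r hr => ?_
  have hn : ‖(r : ℂ) * Complex.exp (φ * I)‖ = r := by
    rw [norm_mul, Complex.norm_exp_ofReal_mul_I, mul_one, Complex.norm_of_nonneg hr.le]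
  have h1 := hSb r hr
  have h2 := hgb r hr
  rw [hn] at h1 h2
  calc ‖S (r * Complex.exp (φ * I)) (g (r * Complex.exp (φ * I)))‖
      ≤ K / (1 + r) * (C * (r + 1) ^ (-δ)) :=
        (ContinuousLinearMap.le_opNorm _ _).trans
          (mul_le_mul h1 h2 (norm_nonneg _) (by positivity))
    _ = K * C * (r + 1) ^ (-1 - δ) := by
        rw [sub_eq_add_neg, Real.rpow_add (by positivity), Real.rpow_neg_one, add_comm 1 r]
        ring

section SumOfOperators

variable {A B : E →ₗ.[ℂ] E} {RA RB : ℂ → E →L[ℂ] E} {θA θB KA KB : ℝ}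

lemma ResolventCommuting.commute (h : ResolventCommuting RA RB θA θB)
    (hA : IsSectorial A θA RA KA) (hB : IsSectorial B θB RB KB) {z w : ℂ}
    (hz : z ∈ Sector θA) (hw : w ∈ Sector θB) : Commute (RA z) (RB w) := by
  obtain ⟨lam, hlam, mu, hmu, hc⟩ := h
  have h1 := (hA.res lam hlam).commute_of_commute (hA.res z hz) hc
  exact ((hB.res mu hmu).commute_of_commute (hB.res w hw) h1.symm).symm

variable {φ δ C : ℝ}

lemma IsSectorial.continuousOn_ray (hB : IsSectorial B θB RB KB) (hθ : θB < Real.pi)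
    (hφ : |φ| ≤ θB) :
    ContinuousOn (fun r : ℝ => RB (r * Complex.exp (φ * I))) (Ioi 0) :=
  hB.continuousOn.comp (by fun_prop) fun _ hr => ray_mem_sector hθ hφ hr

lemma IsSectorial.continuousOn_neg_ray (hA : IsSectorial A θA RA KA) (hθ : θA < Real.pi)
    (hφ : Real.pi - θA ≤ |φ|) (hφ' : |φ| ≤ Real.pi) :
    ContinuousOn (fun r : ℝ => RA (-(r * Complex.exp (φ * I)))) (Ioi 0) :=
  hA.continuousOn.comp (by fun_prop) fun _ hr => neg_ray_mem_sector hθ hφ hφ' hr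

/-- `(A⁻¹ + B⁻¹) 𝒦 y = A⁻¹ B⁻¹ y`. -/
lemma resolvent_add_Kop [CompleteSpace E] (hθA : θA < Real.pi) (hBA : θB < θA)
    (hsum : Real.pi < θA + θB) (hA : IsSectorial A θA RA KA) (hB : IsSectorial B θB RB KB)
    (hcomm : ResolventCommuting RA RB θA θB) (y : E)
    (h1 : IntegrableOn (fun r : ℝ => RA (-(r * Complex.exp (θB * I)))
      (RB (r * Complex.exp (θB * I)) y)) (Ioi 0))
    (h2 : IntegrableOn (fun r : ℝ => RA (-(r * Complex.exp ((-θB : ℝ) * I)))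
      (RB (r * Complex.exp ((-θB : ℝ) * I)) y)) (Ioi 0)) :
    RA 0 (Kop RA RB θB y) + RB 0 (Kop RA RB θB y) = RA 0 (RB 0 y) := by
  have hB0 : 0 < θB := by linarith
  have hA0 : 0 < θA := by linarith
  have hBpi : θB < Real.pi := by linarith
  have hφ : |θB| ≤ θB := (abs_of_pos hB0).le
  have hφ' : |-θB| ≤ θB := by rwa [abs_neg]
  have hψ : |θB - Real.pi| ≤ θA := abs_le.2 ⟨by linarith, by linarith⟩
  have hψ' : |(-(θB - Real.pi))| ≤ θA := by rwa [abs_neg]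
  have hP := hA.res 0 (zero_mem_sector hA0.le)
  have hQ := hB.res 0 (zero_mem_sector hB0.le)
  set L : E →L[ℂ] E := RA 0 + RB 0 with hL
  set f : ℂ → E := fun z => RA (-z) (RB z y) with hf
  have hstep : ∀ z : ℂ, -z ∈ Sector θA → z ∈ Sector θB →
      z • L (f z) = RA (-z) (RB 0 y) - RA 0 (RB z y) := by
    intro z hzA hzB
    have e1 := hP.map_sub_smul (hA.res _ hzA) (RB z y)
    have e2 := hQ.map_sub_smul (hB.res _ hzB) y
    have hc : RA (-z) (RB 0 (RB z y)) = RB 0 (RA (-z) (RB z y)) :=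
      DFunLike.congr_fun (hcomm.commute hA hB hzA (zero_mem_sector hB0.le)).eq _
    rw [map_sub, map_smul, sub_eq_iff_eq_add] at e1 e2
    rw [e1, e2, map_add, map_smul, hc]
    simp only [hL, hf, add_apply]
    module
  have hzB : ∀ s : ℝ, Complex.exp (s + θB * I) ∈ Sector θB :=
    fun s => exp_mem_sector hBpi (by simpa using hφ)
  have hzB' : ∀ s : ℝ, Complex.exp (s + (-θB : ℝ) * I) ∈ Sector θB :=
    fun s => exp_mem_sector hBpi (by simpa using hφ')
  have eA : ∀ s : ℝ, -Complex.exp (s + θB * I) =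
      Complex.exp (s + (θB - Real.pi : ℝ) * I) := fun s => neg_exp_add_mul_I s θB
  have eA' : ∀ s : ℝ, -Complex.exp (s + (-θB : ℝ) * I) =
      Complex.exp (s + (-(θB - Real.pi) : ℝ) * I) := fun s => by
    rw [neg_exp_add_mul_I', neg_sub, sub_eq_add_neg, add_comm (-θB)]
  have hzA : ∀ s : ℝ, -Complex.exp (s + θB * I) ∈ Sector θA := fun s => by
    rw [eA]; exact exp_mem_sector hθA (by simpa using hψ)
  have hzA' : ∀ s : ℝ, -Complex.exp (s + (-θB : ℝ) * I) ∈ Sector θA := fun s => by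
    rw [eA']; exact exp_mem_sector hθA (by simpa using hψ')
  have hlim1 := tendsto_integral_exp_gammaIntegral (f := fun z => L (f z)) (θ := θB)
    (L.integrable_comp h1) (L.integrable_comp h2)
  have hlim2 := (hA.tendsto_integral_exp hθA hψ (RB 0 y)).sub
    (((RA 0).continuous.tendsto _).comp (hB.tendsto_integral_exp hBpi hφ y))
  have heq : ∀ n : ℝ, (∫ s in (-n)..n,
      (Complex.exp (s + θB * I) • L (f (Complex.exp (s + θB * I))) -
        Complex.exp (s + (-θB : ℝ) * I) • L (f (Complex.exp (s + (-θB : ℝ) * I))))) =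
      (∫ s in (-n)..n, (RA (Complex.exp (s + (θB - Real.pi : ℝ) * I)) (RB 0 y) -
        RA (Complex.exp (s + (-(θB - Real.pi) : ℝ) * I)) (RB 0 y))) -
      RA 0 (∫ s in (-n)..n, (RB (Complex.exp (s + θB * I)) y -
        RB (Complex.exp (s + (-θB : ℝ) * I)) y)) := by
    intro n
    have c1 : Continuous fun s : ℝ => RA (Complex.exp (s + (θB - Real.pi : ℝ) * I)) (RB 0 y) -
        RA (Complex.exp (s + (-(θB - Real.pi) : ℝ) * I)) (RB 0 y) :=
      (hA.continuous_exp_line hθA hψ (RB 0 y)).sub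
      (hA.continuous_exp_line hθA hψ' (RB 0 y))
    have c2 : Continuous fun s : ℝ => RB (Complex.exp (s + θB * I)) y -
        RB (Complex.exp (s + (-θB : ℝ) * I)) y :=
      (hB.continuous_exp_line hBpi hφ y).sub (hB.continuous_exp_line hBpi hφ' y)
    have c3 := (RA 0).continuous.comp' c2
    rw [← (RA 0).intervalIntegral_comp_comm (c2.intervalIntegrable (μ := volume) _ _),
      ← intervalIntegral.integral_sub (c1.intervalIntegrable (μ := volume) _ _)
        (c3.intervalIntegrable (μ := volume) _ _)]
    refine intervalIntegral.integral_congr fun s _ => ?_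
    rw [hstep _ (hzA s) (hzB s), hstep _ (hzA' s) (hzB' s), eA, eA', map_sub]
    abel
  simp only [heq] at hlim1
  have hgamma := tendsto_nhds_unique hlim1 hlim2
  have hK : L (Kop RA RB θB y) = RA 0 (RB 0 y) := by
    rw [Kop, map_smul, map_gammaIntegral L h1 h2, hgamma, map_smul, ← sub_smul, smul_smul]
    rw [show (2 * Real.pi * I : ℂ)⁻¹ * (-(2 * (θB - Real.pi : ℝ) * I) - -(2 * θB * I)) = 1 by
      push_cast
      rw [show -(2 * ((θB : ℂ) - Real.pi) * I) - -(2 * θB * I) = 2 * Real.pi * I by ring]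
      exact inv_mul_cancel₀ Complex.two_pi_I_ne_zero, one_smul]
  exact hK

lemma exists_Kop_eq_apply_left [CompleteSpace E] (hθA : θA < Real.pi) (hBA : θB < θA)
    (hsum : Real.pi < θA + θB) (hA : IsSectorial A θA RA KA) (hB : IsSectorial B θB RB KB)
    (hcomm : ResolventCommuting RA RB θA θB) (hδ : 0 < δ) (y : E)
    (hy : ∀ z ∈ Sector θA, ‖y - z • RA z y‖ ≤ C * (‖z‖ + 1) ^ (-δ)) :
    ∃ u, Kop RA RB θB y = RA 0 u := by
  have hB0 : 0 < θB := by linarith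
  have hA0 : 0 < θA := by linarith
  have hBpi : θB < Real.pi := by linarith
  have hKB : 0 ≤ KB := zero_le_one.trans hB.one_le
  set g : ℂ → E := fun z => RB z (y - (-z) • RA (-z) y) with hg
  have hint : ∀ φ : ℝ, |φ| = θB →
      IntegrableOn (fun r : ℝ => g (r * Complex.exp (φ * I))) (Ioi 0) := fun φ hφ => by
    have hm := fun (r : ℝ) (hr : 0 < r) =>
      neg_ray_mem_sector (φ := φ) hθA (by linarith) (by linarith) hr
    refine integrableOn_ray_clm_apply (S := RB) (C := C) (g := fun z => y - (-z) • RA (-z) y) hδ hKB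
      (hB.continuousOn_ray hBpi hφ.le) ?_
      (fun r hr => hB.norm_le_div (ray_mem_sector hBpi hφ.le hr)) fun r hr => ?_
    · have := hA.continuousOn_neg_ray (φ := φ) hθA (by linarith) (by linarith)
      exact continuousOn_const.sub (ContinuousOn.smul (by fun_prop)
        (this.clm_apply continuousOn_const))
    · simpa only [norm_neg] using hy _ (hm r hr)
  have hpt : ∀ φ : ℝ, |φ| = θB → ∀ r : ℝ, 0 < r → RA (-(r * Complex.exp (φ * I)))
      (RB (r * Complex.exp (φ * I)) y) = RA 0 (g (r * Complex.exp (φ * I))) := by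
    intro φ hφ r hr
    have hzB := ray_mem_sector hBpi hφ.le hr
    have hzA := neg_ray_mem_sector (φ := φ) hθA (by linarith) (by linarith) hr
    set z := (r : ℂ) * Complex.exp (φ * I)
    have c0 : RA 0 (RB z (y - (-z) • RA (-z) y)) = RB z (RA 0 (y - (-z) • RA (-z) y)) :=
      DFunLike.congr_fun (hcomm.commute hA hB (zero_mem_sector hA0.le) hzB).eq _
    have c1 : RA (-z) (RB z y) = RB z (RA (-z) y) :=
      DFunLike.congr_fun (hcomm.commute hA hB hzA hzB).eq _
    rw [hg, c0, (hA.res 0 (zero_mem_sector hA0.le)).map_sub_smul (hA.res _ hzA), c1]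
  have a1 : |θB| = θB := abs_of_pos hB0
  have a2 : |-θB| = θB := by rw [abs_neg, a1]
  refine ⟨(2 * Real.pi * I : ℂ)⁻¹ • gammaIntegral θB g, ?_⟩
  rw [map_smul, map_gammaIntegral (RA 0) (hint _ a1) (hint _ a2), Kop,
    gammaIntegral_congr (g := fun z => RA 0 (g z)) (hpt _ a1) (hpt _ a2)]

lemma exists_Kop_eq_apply_right [CompleteSpace E] (hθA : θA < Real.pi) (hBA : θB < θA)
    (hsum : Real.pi < θA + θB) (hA : IsSectorial A θA RA KA) (hB : IsSectorial B θB RB KB)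
    (hcomm : ResolventCommuting RA RB θA θB) (hδ : 0 < δ) (y : E)
    (hy : ∀ z ∈ Sector θB, ‖y - z • RB z y‖ ≤ C * (‖z‖ + 1) ^ (-δ)) :
    ∃ v, Kop RA RB θB y = RB 0 v := by
  have hB0 : 0 < θB := by linarith
  have hBpi : θB < Real.pi := by linarith
  have hKA : 0 ≤ KA := zero_le_one.trans hA.one_le
  set g : ℂ → E := fun z => RA (-z) (y - z • RB z y) with hg
  have hint : ∀ φ : ℝ, |φ| = θB →
      IntegrableOn (fun r : ℝ => g (r * Complex.exp (φ * I))) (Ioi 0) := fun φ hφ => by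
    refine integrableOn_ray_clm_apply (S := fun z => RA (-z)) (g := fun z => y - z • RB z y)
      hδ hKA (hA.continuousOn_neg_ray hθA (by linarith) (by linarith)) ?_ (fun r hr => ?_)
      fun r hr => hy _ (ray_mem_sector hBpi hφ.le hr)
    · exact continuousOn_const.sub (ContinuousOn.smul (by fun_prop)
        ((hB.continuousOn_ray hBpi hφ.le).clm_apply continuousOn_const))
    · simpa only [norm_neg] using hA.norm_le_div
        (neg_ray_mem_sector (φ := φ) hθA (by linarith) (by linarith) hr)
  have hpt : ∀ φ : ℝ, |φ| = θB → ∀ r : ℝ, 0 < r → RA (-(r * Complex.exp (φ * I)))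
      (RB (r * Complex.exp (φ * I)) y) = RB 0 (g (r * Complex.exp (φ * I))) := by
    intro φ hφ r hr
    have hzB := ray_mem_sector hBpi hφ.le hr
    have hzA := neg_ray_mem_sector (φ := φ) hθA (by linarith) (by linarith) hr
    set z := (r : ℂ) * Complex.exp (φ * I)
    have c0 : RA (-z) (RB 0 (y - z • RB z y)) = RB 0 (RA (-z) (y - z • RB z y)) :=
      DFunLike.congr_fun (hcomm.commute hA hB hzA (zero_mem_sector hB0.le)).eq _
    rw [hg, ← c0, (hB.res 0 (zero_mem_sector hB0.le)).map_sub_smul (hB.res _ hzB)]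
  have a1 : |θB| = θB := abs_of_pos hB0
  have a2 : |-θB| = θB := by rw [abs_neg, a1]
  refine ⟨(2 * Real.pi * I : ℂ)⁻¹ • gammaIntegral θB g, ?_⟩
  rw [map_smul, map_gammaIntegral (RB 0) (hint _ a1) (hint _ a2), Kop,
    gammaIntegral_congr (g := fun z => RB 0 (g z)) (hpt _ a1) (hpt _ a2)]

end SumOfOperators

/-- If `y ∈ (E,𝒟(A))_{θ,p}` or `y ∈ (E,𝒟(B))_{θ,p}` for some `θ ∈ (0,1)`, `p ∈ [1,∞)`,
then `x = (1/(2πi)) ∫_{Γ_{θ_B}} (A-z)⁻¹(B+z)⁻¹ y dz` belongs to `𝒟(A) ∩ 𝒟(B)` and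
`(A+B)x = y`. -/
theorem Kop_mem_domain_of_memInterp
    [CompleteSpace E]
    (θA θB KA KB : ℝ) (hθA : θA < Real.pi) (hBA : θB < θA) (hsum : Real.pi < θA + θB)
    (A B : E →ₗ.[ℂ] E) (RA RB : ℂ → E →L[ℂ] E)
    (hA : IsSectorial A θA RA KA) (hB : IsSectorial B θB RB KB)
    (hcomm : ResolventCommuting RA RB θA θB)
    (θ p : ℝ) (hθ : θ ∈ Ioo (0 : ℝ) 1) (hp : 1 ≤ p)
    (y : E) (hy : MemInterp A θ p y ∨ MemInterp B θ p y) :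
    ∃ (hxA : Kop RA RB θB y ∈ A.domain) (hxB : Kop RA RB θB y ∈ B.domain),
      A ⟨Kop RA RB θB y, hxA⟩ + B ⟨Kop RA RB θB y, hxB⟩ = y := by
  have hB0 : 0 < θB := by linarith
  have hA0 : 0 < θA := by linarith
  have hBpi : θB < Real.pi := by linarith
  have hKA : 0 ≤ KA := zero_le_one.trans hA.one_le
  have hint : ∀ φ : ℝ, |φ| = θB → IntegrableOn (fun r : ℝ =>
      RA (-(r * Complex.exp (φ * I))) (RB (r * Complex.exp (φ * I)) y)) (Ioi 0) := fun φ hφ => by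
    refine integrableOn_ray_clm_apply (S := fun z => RA (-z)) (g := fun z => RB z y)
      (C := KB * ‖y‖) one_pos hKA
      (hA.continuousOn_neg_ray hθA (by linarith) (by linarith))
      ((hB.continuousOn_ray hBpi hφ.le).clm_apply continuousOn_const) (fun r hr => ?_)
      fun r hr => ?_
    · simpa only [norm_neg] using hA.norm_le_div
        (neg_ray_mem_sector (φ := φ) hθA (by linarith) (by linarith) hr)
    · refine ((RB _).le_of_opNorm_le
        (hB.norm_le_div (ray_mem_sector hBpi hφ.le hr)) y).trans_eq ?_
      rw [Real.rpow_neg_one, add_comm (1 : ℝ)]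
      ring
  have a1 : |θB| = θB := abs_of_pos hB0
  have a2 : |-θB| = θB := by rw [abs_neg, a1]
  have hP := hA.res 0 (zero_mem_sector hA0.le)
  have hQ := hB.res 0 (zero_mem_sector hB0.le)
  have hPQ := hcomm.commute hA hB (zero_mem_sector hA0.le) (zero_mem_sector hB0.le)
  have key := resolvent_add_Kop hθA hBA hsum hA hB hcomm y (hint _ a1) (hint _ a2)
  have hp0 : 0 < p := one_pos.trans_le hp
  rcases hy with hy | hy
  · obtain ⟨C, hCy⟩ := hA.exists_norm_sub_smul_le hy hθ.1.le hp0
    obtain ⟨u, hu⟩ := exists_Kop_eq_apply_left hθA hBA hsum hA hB hcomm hθ.1 y hCy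
    obtain ⟨hxB, hxA, h⟩ := hQ.exists_add_eq hP hPQ.symm (y := y)
      (by rw [add_comm, key]; exact DFunLike.congr_fun hPQ.eq y) hu
    exact ⟨hxA, hxB, by rw [add_comm, h]⟩
  · obtain ⟨C, hCy⟩ := hB.exists_norm_sub_smul_le hy hθ.1.le hp0
    obtain ⟨v, hv⟩ := exists_Kop_eq_apply_right hθA hBA hsum hA hB hcomm hθ.1 y hCy
    exact hP.exists_add_eq hQ hPQ key hv

end
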